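/- Let (S,m) be a Noetherian local ring containing a field of characteristic p > 0, let J be an m-primary ideal, and let N be a finitely generated S-module. Then there exist positive constants C_1 and C_2 such that for all n ∈ ℕ: λ_S(N/J^{[p^n]}N) ≤ C_1 (p^n)^{dim N} and λ_S(Tor_1^S(N, S/J^{[p^n]})) ≤ C_2 (p^n)^{dim N}, where λ_S denotes length of an S-module and dim N is the Krull dimension of N. -/

import Mathlib

open CategoryTheory

noncomputable section

/-- The Frobenius bracket power `I^{[q]}` of an ideal. -/
def bracketPow {R : Type*} [CommSemiring R] (I : Ideal R) (q : ℕ) : Ideal R :=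
  Ideal.span ((fun x : R => x ^ q) '' (I : Set R))

/-- The length of a module, as the Krull dimension of its lattice of submodules. -/
def moduleLength (R M : Type*) [CommRing R] [AddCommGroup M] [Module R M] : WithBot ℕ∞ :=
  Order.krullDim (Submodule R M)

/-!
By prime avoidance there is a family `y` of `dim N` elements of `J` such that
`S / (ann N + (y))` is Artinian, so the Koszul homology modules `H₀(y; N)` and `H₁(y; N)` have
finite length. Splitting a product in one entry of the family bounds the length of `Hᵢ` by the sum
of the lengths for the two factors; hence the length of `Hᵢ(y^q; N)` is at most `q ^ dim N` times
that of `Hᵢ(y; N)`.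

For `I = J^{[q]}`, which contains `y^q`, the module `N / I N` is a quotient of `H₀(y^q; N)`, and
`Tor₁(N, S / I) = ker (N ⊗ I → N)` has length at most that of `H₁(y^q; N)` plus `k` times that of
`H₀(y^q; N)`, where `k` is the number of generators of `I`. The characteristic enters only here:
for `q = p ^ n` the ideal `J^{[q]}` is generated by the `q`-th powers of generators of `J`, so `k`
can be chosen independently of `n`.
-/

section Parameters

lemma exists_mem_forall_minimalPrimes_notMem {R : Type*} [CommRing R] [IsNoetherianRing R]
    (I K : Ideal R) : ∃ z ∈ I, ∀ P ∈ K.minimalPrimes, ¬ I ≤ P → z ∉ P := by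
  have hfin : {P ∈ K.minimalPrimes | ¬ I ≤ P}.Finite :=
    K.finite_minimalPrimes_of_isNoetherianRing.subset (Set.sep_subset _ _)
  have hI : ¬ (I : Set R) ⊆ ⋃ P ∈ {P ∈ K.minimalPrimes | ¬ I ≤ P}, (P : Set R) := by
    refine mt (Ideal.subset_union_prime_finite hfin (f := id) ⊥ ⊥ fun P hP _ _ ↦ hP.1.1.1).mp ?_
    rintro ⟨P, hP, hIP⟩
    exact hP.2 hIP
  obtain ⟨z, hzI, hz⟩ := Set.not_subset.mp hI
  simp only [Set.mem_iUnion, not_exists] at hz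
  exact ⟨z, hzI, fun P hP hIP ↦ hz P ⟨hP, hIP⟩⟩

lemma exists_fin_forall_le_or_le_height {R : Type*} [CommRing R] [IsNoetherianRing R]
    (I : Ideal R) (r : ℕ) :
    ∃ y : Fin r → R, (∀ i, y i ∈ I) ∧
      ∀ P : Ideal R, P.IsPrime → Ideal.span (Set.range y) ≤ P → I ≤ P ∨ (r : ℕ∞) ≤ P.height := by
  induction r with
  | zero => exact ⟨Fin.elim0, fun i ↦ i.elim0, fun P _ _ ↦ Or.inr (by simp)⟩
  | succ r ih =>
    obtain ⟨y, hyI, hy⟩ := ih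
    obtain ⟨z, hzI, hz⟩ := exists_mem_forall_minimalPrimes_notMem I (Ideal.span (Set.range y))
    refine ⟨Fin.cons z y, Fin.cases hzI hyI, fun P hP hle ↦ or_iff_not_imp_left.mpr fun hIP ↦ ?_⟩
    rw [Fin.range_cons, Ideal.span_insert, sup_le_iff, Ideal.span_singleton_le_iff_mem] at hle
    obtain ⟨Q, hQ, hQP⟩ := Ideal.exists_minimalPrimes_le hle.2
    have hIQ : ¬ I ≤ Q := fun h ↦ hIP (h.trans hQP)
    have hlt : Q < P := lt_of_le_of_ne hQP fun h ↦ hz Q hQ hIQ (h ▸ hle.1)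
    have := hQ.1.1
    calc ((r + 1 : ℕ) : ℕ∞) ≤ Q.height + 1 := by
          push_cast; gcongr; exact (hy Q hQ.1.1 hQ.1.2).resolve_left hIQ
      _ ≤ P.height := Ideal.height_add_one_le_of_lt_of_isPrime hlt

lemma isArtinianRing_quotient_of_forall_isMaximal {R : Type*} [CommRing R] [IsNoetherianRing R]
    {I : Ideal R} (h : ∀ P : Ideal R, P.IsPrime → I ≤ P → P.IsMaximal) :
    IsArtinianRing (R ⧸ I) := by
  have : Ring.KrullDimLE 0 (R ⧸ I) := Ring.krullDimLE_zero_iff.mpr fun P hP ↦ by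
    have hker : RingHom.ker (Ideal.Quotient.mk I) ≤ P.comap (Ideal.Quotient.mk I) :=
      Ideal.ker_le_comap _
    have hmax := h (P.comap (Ideal.Quotient.mk I)) inferInstance (Ideal.mk_ker.symm.trans_le hker)
    rw [← Ideal.map_comap_of_surjective _ Ideal.Quotient.mk_surjective P]
    exact Ideal.IsMaximal.map_of_surjective_of_ker_le Ideal.Quotient.mk_surjective hker
  exact IsNoetherianRing.isArtinianRing_of_krullDimLE_zero

lemma exists_fin_isArtinianRing_quotient_span {R : Type*} [CommRing R] [IsNoetherianRing R]
    (I : Ideal R) [IsArtinianRing (R ⧸ I)] {d : ℕ} (hd : ringKrullDim R ≤ d) :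
    ∃ y : Fin d → R, (∀ i, y i ∈ I) ∧ IsArtinianRing (R ⧸ Ideal.span (Set.range y)) := by
  obtain ⟨y, hyI, hy⟩ := exists_fin_forall_le_or_le_height I d
  refine ⟨y, hyI, isArtinianRing_quotient_of_forall_isMaximal fun P hP hle ↦ ?_⟩
  rcases hy P hP hle with hIP | hheight
  · have : (P.map (Ideal.Quotient.mk I)).IsPrime :=
      Ideal.map_isPrime_of_surjective Ideal.Quotient.mk_surjective (by simpa using hIP)
    have hmax : (P.map (Ideal.Quotient.mk I)).IsMaximal := inferInstance
    rw [← Ideal.comap_map_mk hIP]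
    exact Ideal.comap_isMaximal_of_surjective _ Ideal.Quotient.mk_surjective
  · have hdim : (d : WithBot ℕ∞) ≤ P.height := by exact_mod_cast hheight
    have hbot : ringKrullDim R ≠ ⊥ :=
      ((WithBot.bot_lt_coe _).trans_le (Ideal.height_le_ringKrullDim_of_isPrime (I := P))).ne'
    have htop : ringKrullDim R ≠ ⊤ :=
      (hd.trans_lt (WithBot.coe_lt_coe.mpr (ENat.natCast_lt_top d))).ne
    have : FiniteRingKrullDim R := finiteRingKrullDim_iff_ne_bot_and_top.mpr ⟨hbot, htop⟩
    exact Ideal.isMaximal_of_height_eq_ringKrullDim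
      (Ideal.height_le_ringKrullDim_of_isPrime.antisymm (hd.trans hdim))

lemma exists_fin_isArtinianRing_quotient_sup_span {S : Type*} [CommRing S] [IsNoetherianRing S]
    (A J : Ideal S) [IsArtinianRing (S ⧸ J)] {d : ℕ} (hd : ringKrullDim (S ⧸ A) ≤ d) :
    ∃ y : Fin d → S, (∀ i, y i ∈ J) ∧ IsArtinianRing (S ⧸ (A ⊔ Ideal.span (Set.range y))) := by
  have : IsArtinianRing ((S ⧸ A) ⧸ J.map (Ideal.Quotient.mk A)) :=
    (DoubleQuot.quotQuotEquivComm J A).isArtinianRing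
  obtain ⟨y, hyJ, hy⟩ :=
    exists_fin_isArtinianRing_quotient_span (J.map (Ideal.Quotient.mk A)) hd
  choose x hxJ hxy using fun i ↦
    (Ideal.mem_map_iff_of_surjective _ Ideal.Quotient.mk_surjective).mp (hyJ i)
  have hmap : Ideal.span (Set.range y) =
      (Ideal.span (Set.range x)).map (Ideal.Quotient.mk A) := by
    rw [Ideal.map_span, ← Set.range_comp]
    congr
    ext i
    exact (hxy i).symm
  rw [hmap] at hy
  exact ⟨x, hxJ, (DoubleQuot.quotQuotEquivQuotSup A _).isArtinianRing⟩

end Parameters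

section Length

variable {M M' M'' : Type*} [AddCommGroup M] [AddCommGroup M'] [AddCommGroup M'']

lemma length_le_add_of_exact {R : Type*} [Ring R] [Module R M] [Module R M'] [Module R M'']
    {f : M' →ₗ[R] M} {g : M →ₗ[R] M''} (h : Function.Exact f g) :
    Module.length R M ≤ Module.length R M' + Module.length R M'' :=
  calc Module.length R M
      = Module.length R (LinearMap.ker g) + Module.length R (LinearMap.range g) :=
        Module.length_eq_add_of_exact (LinearMap.ker g).subtype g.rangeRestrict
          (Submodule.subtype_injective _) g.surjective_rangeRestrict
          (LinearMap.exact_iff.mpr (by rw [g.ker_rangeRestrict, Submodule.range_subtype]))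
    _ ≤ Module.length R M' + Module.length R M'' := by
        rw [h.linearMap_ker_eq]
        gcongr
        · exact Module.length_le_of_surjective f.rangeRestrict f.surjective_rangeRestrict
        · exact Module.length_le_of_injective _ (Submodule.subtype_injective _)

lemma length_quotient_le_add {R : Type*} [Ring R] [Module R M] [Module R M'] [Module R M'']
    (B' : Submodule R M') (B : Submodule R M) (B'' : Submodule R M'')
    (ψ : M' →ₗ[R] M) (φ : M →ₗ[R] M'') (hψ : B' ≤ B.comap ψ)
    (hφ : B''.comap φ ≤ B ⊔ LinearMap.range ψ) :
    Module.length R (M ⧸ B) ≤ Module.length R (M' ⧸ B') + Module.length R (M'' ⧸ B'') := by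
  have hexact : Function.Exact (B'.mapQ B ψ hψ)
      (Submodule.factor (le_sup_left : B ≤ B ⊔ LinearMap.range ψ)) := by
    rw [LinearMap.exact_iff, Submodule.factor, Submodule.ker_mapQ, Submodule.range_mapQ,
      Submodule.comap_id, Submodule.map_sup, Submodule.mkQ_map_self, bot_sup_eq]
  refine (length_le_add_of_exact hexact).trans ?_
  gcongr
  calc Module.length R (M ⧸ B ⊔ LinearMap.range ψ)
      ≤ Module.length R (M ⧸ B''.comap φ) :=
        Module.length_le_of_surjective (Submodule.factor hφ) (Submodule.factor_surjective hφ)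
    _ ≤ Module.length R (M'' ⧸ B'') :=
        Module.length_le_of_injective ((B''.comap φ).mapQ B'' φ le_rfl) <| by
          rw [← LinearMap.ker_eq_bot, Submodule.ker_mapQ, Submodule.mkQ_map_self]

lemma length_ne_top_of_le_annihilator {S : Type*} [CommRing S] [Module S M] [Module.Finite S M]
    {I : Ideal S} [IsArtinianRing (S ⧸ I)] (h : I ≤ Module.annihilator S M) :
    Module.length S M ≠ ⊤ := by
  have htorsion : Module.IsTorsionBySet S M I := fun x a ↦ Module.mem_annihilator.mp (h a.2) x
  let : Module (S ⧸ I) M := htorsion.module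
  have : IsScalarTower S (S ⧸ I) M := htorsion.isScalarTower
  have : Module.Finite (S ⧸ I) M := Module.Finite.of_restrictScalars_finite S (S ⧸ I) M
  rw [Module.length_eq_of_surjective (R := S ⧸ I) Ideal.Quotient.mk_surjective]
  exact Module.length_ne_top

end Length

section Subadditive

variable {S ι : Type*} [Monoid S] [DecidableEq ι] {h : (ι → S) → ℕ∞}

lemma apply_update_pow_le
    (hmul : ∀ f j u v, h (Function.update f j (u * v)) ≤
      h (Function.update f j u) + h (Function.update f j v))
    (f : ι → S) (j : ι) (a : S) {q : ℕ} (hq : 0 < q) :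
    h (Function.update f j (a ^ q)) ≤ q * h (Function.update f j a) := by
  induction q, hq using Nat.le_induction with
  | base => simp
  | succ q _ ih =>
    rw [pow_succ, Nat.cast_succ, add_one_mul]
    exact (hmul f j (a ^ q) a).trans (by gcongr)

lemma apply_pow_le [Fintype ι]
    (hmul : ∀ f j u v, h (Function.update f j (u * v)) ≤
      h (Function.update f j u) + h (Function.update f j v))
    (f : ι → S) {q : ℕ} (hq : 0 < q) :
    h (f ^ q) ≤ (q ^ Fintype.card ι : ℕ) * h f := by
  have hpiecewise (s : Finset ι) : h (s.piecewise (f ^ q) f) ≤ (q ^ s.card : ℕ) * h f := by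
    induction s using Finset.induction_on with
    | empty => simp
    | insert j s hj ih =>
      have hself : Function.update (s.piecewise (f ^ q) f) j (f j) = s.piecewise (f ^ q) f :=
        Function.update_eq_self_iff.mpr (Finset.piecewise_eq_of_notMem _ _ _ hj).symm
      calc h ((insert j s).piecewise (f ^ q) f)
          = h (Function.update (s.piecewise (f ^ q) f) j (f j ^ q)) := by
            rw [Finset.piecewise_insert, Pi.pow_apply]
        _ ≤ q * h (s.piecewise (f ^ q) f) := by
            simpa only [hself] using apply_update_pow_le hmul (s.piecewise (f ^ q) f) j (f j) hq
        _ ≤ (q ^ (insert j s).card : ℕ) * h f := by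
            rw [Finset.card_insert_of_notMem hj, pow_succ', Nat.cast_mul, mul_assoc]
            gcongr
  simpa using hpiecewise Finset.univ

end Subadditive

section Koszul

variable {S : Type*} [CommRing S] {N : Type*} [AddCommGroup N] [Module S N]
variable {ι : Type*}

lemma update_one_mul_update [DecidableEq ι] (f : ι → S) (j : ι) (u v : S) :
    Function.update (1 : ι → S) j u * Function.update f j v = Function.update f j (u * v) := by
  rw [← Function.update_mul, one_mul]

lemma update_const_mul_update [DecidableEq ι] (f : ι → S) (j : ι) (u v : S) :
    Function.update (fun _ ↦ v) j 1 * Function.update f j (u * v) =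
      v • Function.update f j u := by
  rw [← Function.update_mul, ← Function.update_smul, one_mul, smul_eq_mul, mul_comm u]
  rfl

/-- Multiplication of the `i`-th coordinate by `c i`, used to compare the Koszul complexes of two
families. -/
def scale (N : Type*) [AddCommGroup N] [Module S N] (c : ι → S) : (ι → N) →ₗ[S] (ι → N) :=
  LinearMap.pi fun i ↦ c i • LinearMap.proj i

lemma scale_apply (c : ι → S) (z : ι → N) (i : ι) : scale N c z i = c i • z i :=
  rfl

variable [Fintype ι]

/-- The first differential `N^ι → N` of the Koszul complex of `N` on the family `f`. -/
def koszulD₁ (N : Type*) [AddCommGroup N] [Module S N] (f : ι → S) : (ι → N) →ₗ[S] N :=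
  ∑ i, f i • LinearMap.proj i

lemma koszulD₁_apply (f : ι → S) (z : ι → N) : koszulD₁ N f z = ∑ i, f i • z i := by
  simp [koszulD₁]

/-- The second Koszul differential. It is defined on all families `w` rather than on alternating
ones, through their antisymmetrisation `w i k - w k i`; its range is the usual module of
boundaries. -/
def koszulD₂ (N : Type*) [AddCommGroup N] [Module S N] (f : ι → S) :
    (ι → ι → N) →ₗ[S] (ι → N) :=
  LinearMap.pi fun i ↦ koszulD₁ N f ∘ₗ
    (LinearMap.proj i - (LinearMap.proj i : (ι → N) →ₗ[S] N).compLeft ι)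

lemma koszulD₂_apply (f : ι → S) (w : ι → ι → N) (i : ι) :
    koszulD₂ N f w i = koszulD₁ N f fun k ↦ w i k - w k i :=
  rfl

/-- Koszul homology of `N` on the family `f` in degree `0`. -/
abbrev KoszulH₀ (N : Type*) [AddCommGroup N] [Module S N] (f : ι → S) : Type _ :=
  N ⧸ LinearMap.range (koszulD₁ N f)

/-- Koszul homology of `N` on the family `f` in degree `1`. -/
abbrev KoszulH₁ (N : Type*) [AddCommGroup N] [Module S N] (f : ι → S) : Type _ :=
  LinearMap.ker (koszulD₁ N f) ⧸
    (LinearMap.range (koszulD₂ N f)).submoduleOf (LinearMap.ker (koszulD₁ N f))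

section Annihilator

lemma smul_mem_range_koszulD₁ (f : ι → S) (i : ι) (n : N) :
    f i • n ∈ LinearMap.range (koszulD₁ N f) := by
  classical exact ⟨Pi.single i n, by simp [koszulD₁_apply, Pi.single_apply]⟩

lemma smul_mem_range_koszulD₂ {f : ι → S} {z : ι → N} (hz : koszulD₁ N f z = 0) (i : ι) :
    f i • z ∈ LinearMap.range (koszulD₂ N f) := by
  classical
  refine ⟨fun a b ↦ if b = i then z a else 0, funext fun a ↦ ?_⟩
  rw [koszulD₁_apply] at hz
  by_cases ha : a = i <;>
    simp [koszulD₂_apply, koszulD₁_apply, smul_sub, Finset.sum_sub_distrib, ha, hz]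

lemma annihilator_sup_span_le_annihilator_koszulH₀ (f : ι → S) :
    Module.annihilator S N ⊔ Ideal.span (Set.range f) ≤ Module.annihilator S (KoszulH₀ N f) := by
  refine sup_le (LinearMap.annihilator_le_of_surjective _ (Submodule.mkQ_surjective _))
    (Ideal.span_le.mpr ?_)
  rintro _ ⟨i, rfl⟩
  refine Module.mem_annihilator.mpr fun x ↦ ?_
  obtain ⟨n, rfl⟩ := Submodule.mkQ_surjective _ x
  rw [← map_smul, Submodule.mkQ_apply, Submodule.Quotient.mk_eq_zero]
  exact smul_mem_range_koszulD₁ f i n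

lemma annihilator_sup_span_le_annihilator_koszulH₁ (f : ι → S) :
    Module.annihilator S N ⊔ Ideal.span (Set.range f) ≤ Module.annihilator S (KoszulH₁ N f) := by
  refine sup_le (fun a ha ↦ Module.mem_annihilator.mpr fun x ↦ ?_) (Ideal.span_le.mpr ?_)
  · obtain ⟨z, rfl⟩ := Submodule.mkQ_surjective _ x
    have hz : a • z = 0 := Subtype.ext <| funext fun i ↦ Module.mem_annihilator.mp ha _
    rw [← map_smul, hz, map_zero]
  · rintro _ ⟨i, rfl⟩
    refine Module.mem_annihilator.mpr fun x ↦ ?_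
    obtain ⟨⟨z, hz⟩, rfl⟩ := Submodule.mkQ_surjective _ x
    rw [← map_smul, Submodule.mkQ_apply, Submodule.Quotient.mk_eq_zero]
    exact smul_mem_range_koszulD₂ hz i

end Annihilator

lemma koszulD₁_scale (f c : ι → S) (z : ι → N) :
    koszulD₁ N f (scale N c z) = koszulD₁ N (c * f) z := by
  simp only [koszulD₁_apply, scale_apply, Pi.mul_apply, smul_smul, mul_comm]

lemma koszulD₁_smul (a : S) (f : ι → S) (z : ι → N) :
    koszulD₁ N (a • f) z = a • koszulD₁ N f z := by
  simp only [koszulD₁_apply, Pi.smul_apply, smul_assoc, Finset.smul_sum]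

section Update

open Function (update)

variable [DecidableEq ι]

lemma koszulD₁_update (f : ι → S) (j : ι) (a : S) (z : ι → N) :
    koszulD₁ N (update f j a) z =
      a • z j + ∑ i ∈ Finset.univ.erase j, f i • z i := by
  rw [koszulD₁_apply, ← Finset.add_sum_erase _ _ (Finset.mem_univ j), Function.update_self]
  congr 1
  refine Finset.sum_congr rfl fun i hi ↦ ?_
  rw [Function.update_of_ne (Finset.ne_of_mem_erase hi)]

lemma koszulD₁_scale_update_one (f : ι → S) (j : ι) (u v : S) (z : ι → N) :
    koszulD₁ N (update f j v) (scale N (update 1 j u) z) =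
      koszulD₁ N (update f j (u * v)) z := by
  rw [koszulD₁_scale, update_one_mul_update]

lemma koszulD₁_scale_update_const (f : ι → S) (j : ι) (u v : S) (z : ι → N) :
    koszulD₁ N (update f j (u * v)) (scale N (update (fun _ ↦ v) j 1) z) =
      v • koszulD₁ N (update f j u) z := by
  rw [koszulD₁_scale, update_const_mul_update, koszulD₁_smul]

lemma length_koszulH₀_update_mul_le (f : ι → S) (j : ι) (u v : S) :
    Module.length S (KoszulH₀ N (update f j (u * v))) ≤
      Module.length S (KoszulH₀ N (update f j u)) +
        Module.length S (KoszulH₀ N (update f j v)) := by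
  refine length_quotient_le_add _ _ _ (LinearMap.lsmul S N v) LinearMap.id ?_ ?_
  · rintro _ ⟨z, rfl⟩
    exact ⟨_, koszulD₁_scale_update_const f j u v z⟩
  · rintro _ ⟨z, rfl⟩
    refine Submodule.mem_sup.mpr
      ⟨_, ⟨update z j 0, rfl⟩, _, ⟨z j, rfl⟩, ?_⟩
    rw [koszulD₁_update, koszulD₁_update, Function.update_self, smul_zero, zero_add, add_comm,
      LinearMap.lsmul_apply]
    congr 1
    exact Finset.sum_congr rfl fun i hi ↦ by
      rw [Function.update_of_ne (Finset.ne_of_mem_erase hi)]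

lemma scale_koszulD₂_mem_range (f : ι → S) (j : ι) (u v : S) (w : ι → ι → N) :
    scale N (update (fun _ ↦ v) j 1) (koszulD₂ N (update f j u) w) ∈
      LinearMap.range (koszulD₂ N (update f j (u * v))) := by
  refine ⟨fun a b ↦ if a = j ∨ b = j then w a b else v • w a b, funext fun i ↦ ?_⟩
  rw [scale_apply, koszulD₂_apply, koszulD₂_apply, koszulD₁_update, koszulD₁_update]
  by_cases hi : i = j
  · subst hi
    simp
  · simp only [or_true, if_true, hi, false_or, or_false, Function.update_of_ne hi, smul_add,
      Finset.smul_sum, smul_smul, mul_comm v u]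
    congr 1
    refine Finset.sum_congr rfl fun k hk ↦ ?_
    rw [if_neg (Finset.ne_of_mem_erase hk), if_neg (Finset.ne_of_mem_erase hk), ← smul_sub,
      smul_smul, mul_comm]

lemma exists_cycle_sub_scale_mem_range (f : ι → S) (j : ι) (u v : S) {z : ι → N}
    (hz : scale N (update 1 j u) z ∈
      LinearMap.range (koszulD₂ N (update f j v))) :
    ∃ x ∈ LinearMap.ker (koszulD₁ N (update f j u)),
      z - scale N (update (fun _ ↦ v) j 1) x ∈
        LinearMap.range (koszulD₂ N (update f j (u * v))) := by
  obtain ⟨w, hw⟩ := hz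
  have hzj : u • z j = ∑ k ∈ Finset.univ.erase j, f k • (w j k - w k j) := by
    simpa [scale_apply, koszulD₂_apply, koszulD₁_update] using (congrFun hw j).symm
  have hzi (i : ι) (hi : i ≠ j) :
      z i = v • (w i j - w j i) + ∑ k ∈ Finset.univ.erase j, f k • (w i k - w k i) := by
    simpa [scale_apply, koszulD₂_apply, koszulD₁_update, hi] using (congrFun hw i).symm
  refine ⟨update (fun i ↦ w i j - w j i) j (z j), ?_,
    fun a b ↦ if a = j ∨ b = j then 0 else w a b, funext fun i ↦ ?_⟩
  · rw [LinearMap.mem_ker, koszulD₁_update, Function.update_self, hzj, ← Finset.sum_add_distrib]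
    refine Finset.sum_eq_zero fun i hi ↦ ?_
    rw [Function.update_of_ne (Finset.ne_of_mem_erase hi), ← smul_add]
    simp
  · rw [koszulD₂_apply, koszulD₁_update, Pi.sub_apply, scale_apply]
    by_cases hi : i = j
    · subst hi
      simp
    · rw [Function.update_of_ne hi, Function.update_of_ne hi, hzi i hi, add_sub_cancel_left]
      simp only [or_true, if_true, sub_self, smul_zero, zero_add, hi, false_or, or_false]
      refine Finset.sum_congr rfl fun k hk ↦ ?_
      rw [if_neg (Finset.ne_of_mem_erase hk), if_neg (Finset.ne_of_mem_erase hk)]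

lemma length_koszulH₁_update_mul_le (f : ι → S) (j : ι) (u v : S) :
    Module.length S (KoszulH₁ N (update f j (u * v))) ≤
      Module.length S (KoszulH₁ N (update f j u)) +
        Module.length S (KoszulH₁ N (update f j v)) := by
  refine length_quotient_le_add _ _ _
    ((scale N (update (fun _ ↦ v) j 1)).restrict fun z hz ↦ ?_)
    ((scale N (update 1 j u)).restrict fun z hz ↦ ?_) ?_ ?_
  · rw [LinearMap.mem_ker] at hz ⊢
    rw [koszulD₁_scale_update_const, hz, smul_zero]
  · rwa [LinearMap.mem_ker, koszulD₁_scale_update_one]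
  · rintro ⟨_, hz⟩ ⟨w, rfl⟩
    exact scale_koszulD₂_mem_range f j u v w
  · rintro ⟨z, hz⟩ hmem
    obtain ⟨x, hx, hzx⟩ := exists_cycle_sub_scale_mem_range f j u v hmem
    exact Submodule.mem_sup.mpr ⟨_, hzx, _, ⟨⟨x, hx⟩, rfl⟩, sub_add_cancel _ _⟩

end Update

lemma length_koszulH₀_pow_le (f : ι → S) {q : ℕ} (hq : 0 < q) :
    Module.length S (KoszulH₀ N (f ^ q)) ≤
      (q ^ Fintype.card ι : ℕ) * Module.length S (KoszulH₀ N f) := by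
  classical
  let h (f : ι → S) : ℕ∞ := Module.length S (KoszulH₀ N f)
  have hmul (f j u v) : h (Function.update f j (u * v)) ≤
      h (Function.update f j u) + h (Function.update f j v) :=
    length_koszulH₀_update_mul_le f j u v
  exact apply_pow_le hmul f hq

lemma length_koszulH₁_pow_le (f : ι → S) {q : ℕ} (hq : 0 < q) :
    Module.length S (KoszulH₁ N (f ^ q)) ≤
      (q ^ Fintype.card ι : ℕ) * Module.length S (KoszulH₁ N f) := by
  classical
  let h (f : ι → S) : ℕ∞ := Module.length S (KoszulH₁ N f)
  have hmul (f j u v) : h (Function.update f j (u * v)) ≤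
      h (Function.update f j u) + h (Function.update f j v) :=
    length_koszulH₁_update_mul_le f j u v
  exact apply_pow_le hmul f hq

end Koszul

section Tensor

open scoped TensorProduct

variable {ι κ : Type*} [Fintype ι] [Fintype κ]

/-- The linear map `N^ι → N ⊗ M` sending `z` to `∑ i, z i ⊗ f i`; it compares the Koszul complex on
generators of an ideal `I` with `N ⊗ I`. -/
def sumTmul (S N : Type*) [CommRing S] [AddCommGroup N] [Module S N] {M : Type*}
    [AddCommGroup M] [Module S M] (f : ι → M) : (ι → N) →ₗ[S] N ⊗[S] M :=
  ∑ i, (TensorProduct.mk S N M).flip (f i) ∘ₗ LinearMap.proj i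

variable {S : Type*} [CommRing S] {N M : Type*} [AddCommGroup N] [Module S N]
variable [AddCommGroup M] [Module S M]

lemma sumTmul_apply (f : ι → M) (z : ι → N) : sumTmul S N f z = ∑ i, z i ⊗ₜ[S] f i := by
  simp [sumTmul]

lemma sumTmul_surjective {g : κ → M} (hg : Submodule.span S (Set.range g) = ⊤) :
    Function.Surjective (sumTmul S N g) := by
  intro x
  induction x with
  | zero => exact ⟨0, map_zero _⟩
  | add a b ha hb =>
    obtain ⟨a, rfl⟩ := ha
    obtain ⟨b, rfl⟩ := hb
    exact ⟨a + b, map_add _ _ _⟩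
  | tmul n m =>
    obtain ⟨c, rfl⟩ := (Submodule.mem_span_range_iff_exists_fun S).mp
      (hg ▸ Submodule.mem_top : m ∈ Submodule.span S (Set.range g))
    exact ⟨fun j ↦ c j • n, by
      simp only [sumTmul_apply, TensorProduct.tmul_sum, TensorProduct.smul_tmul]⟩

variable {I : Ideal S}

lemma rid_lTensor_subtype_sumTmul (f : ι → I) (z : ι → N) :
    TensorProduct.rid S N (I.subtype.lTensor N (sumTmul S N f z)) =
      koszulD₁ N (fun i ↦ (f i : S)) z := by
  simp [sumTmul_apply, koszulD₁_apply]

lemma sumTmul_mem_ker_lTensor_subtype_iff (f : ι → I) (z : ι → N) :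
    sumTmul S N f z ∈ LinearMap.ker (I.subtype.lTensor N) ↔
      z ∈ LinearMap.ker (koszulD₁ N fun i ↦ (f i : S)) := by
  rw [LinearMap.mem_ker, LinearMap.mem_ker, ← rid_lTensor_subtype_sumTmul,
    LinearEquiv.map_eq_zero_iff]

lemma smul_tmul_comm (a b : I) (n : N) :
    ((a : S) • n) ⊗ₜ[S] b = ((b : S) • n) ⊗ₜ[S] a := by
  rw [TensorProduct.smul_tmul (a : S), TensorProduct.smul_tmul (b : S)]
  congr 1
  exact Subtype.ext (mul_comm _ _)

lemma koszulD₁_tmul_mem_range_sumTmul (f : ι → I) (z : ι → N) (a : I) :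
    koszulD₁ N (fun i ↦ (f i : S)) z ⊗ₜ a ∈ LinearMap.range (sumTmul S N f) := by
  refine ⟨(a : S) • z, ?_⟩
  simp only [sumTmul_apply, koszulD₁_apply, TensorProduct.sum_tmul, Pi.smul_apply,
    smul_tmul_comm a]

lemma sumTmul_koszulD₂ (f : ι → I) (w : ι → ι → N) :
    sumTmul S N f (koszulD₂ N (fun i ↦ (f i : S)) w) = 0 := by
  simp only [sumTmul_apply, koszulD₂_apply, koszulD₁_apply, TensorProduct.sum_tmul, smul_sub,
    TensorProduct.sub_tmul, Finset.sum_sub_distrib, sub_eq_zero]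
  rw [Finset.sum_comm]
  simp only [smul_tmul_comm]

lemma length_quotient_range_sumTmul_le (f : ι → I) {g : κ → I}
    (hg : Submodule.span S (Set.range g) = ⊤) :
    Module.length S ((N ⊗[S] I) ⧸ LinearMap.range (sumTmul S N f)) ≤
      Fintype.card κ * Module.length S (KoszulH₀ N fun i ↦ (f i : S)) := by
  classical
  let B : Submodule S (κ → N) := Submodule.pi Set.univ fun _ ↦
    LinearMap.range (koszulD₁ N fun i ↦ (f i : S))
  have hB : B ≤ (LinearMap.range (sumTmul S N f)).comap (sumTmul S N g) := fun z hz ↦ by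
    rw [Submodule.mem_comap, sumTmul_apply]
    refine Submodule.sum_mem _ fun j _ ↦ ?_
    obtain ⟨w, hw⟩ := hz j (Set.mem_univ j)
    exact hw ▸ koszulD₁_tmul_mem_range_sumTmul f w (g j)
  calc Module.length S ((N ⊗[S] I) ⧸ LinearMap.range (sumTmul S N f))
      ≤ Module.length S ((κ → N) ⧸ B) :=
        Module.length_le_of_surjective (B.mapQ _ _ hB) <| by
          rw [← LinearMap.range_eq_top, Submodule.range_mapQ,
            LinearMap.range_eq_top.mpr (sumTmul_surjective hg), Submodule.map_top,
            Submodule.range_mkQ]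
    _ = Fintype.card κ * Module.length S (KoszulH₀ N fun i ↦ (f i : S)) := by
        rw [(Submodule.quotientPi _).length_eq, Module.length_pi_of_fintype]
        simp

lemma length_ker_lTensor_subtype_le (f : ι → I) {g : κ → I}
    (hg : Submodule.span S (Set.range g) = ⊤) :
    Module.length S (LinearMap.ker (I.subtype.lTensor N)) ≤
      Module.length S (KoszulH₁ N fun i ↦ (f i : S)) +
        Fintype.card κ * Module.length S (KoszulH₀ N fun i ↦ (f i : S)) := by
  let T := LinearMap.ker (I.subtype.lTensor N)
  calc Module.length S T
      = Module.length S (T ⧸ (⊥ : Submodule S T)) :=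
        (Submodule.quotEquivOfEqBot ⊥ rfl).length_eq.symm
    _ ≤ Module.length S (KoszulH₁ N fun i ↦ (f i : S)) +
          Module.length S ((N ⊗[S] I) ⧸ LinearMap.range (sumTmul S N f)) := by
        refine length_quotient_le_add _ _ _ ((sumTmul S N f).restrict fun z ↦
          (sumTmul_mem_ker_lTensor_subtype_iff f z).mpr) T.subtype ?_ ?_
        · rintro ⟨_, hz⟩ ⟨w, rfl⟩
          exact Subtype.ext (sumTmul_koszulD₂ f w)
        · rintro ⟨_, hx⟩ ⟨z, rfl⟩
          exact Submodule.mem_sup_right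
            ⟨⟨z, (sumTmul_mem_ker_lTensor_subtype_iff f z).mp hx⟩, rfl⟩
    _ ≤ _ := by
        gcongr
        exact length_quotient_range_sumTmul_le f hg

lemma length_quotient_smul_top_le {f : ι → S} (hf : ∀ i, f i ∈ I) :
    Module.length S (N ⧸ (I • ⊤ : Submodule S N)) ≤ Module.length S (KoszulH₀ N f) := by
  have hle : LinearMap.range (koszulD₁ N f) ≤ I • ⊤ := by
    rintro _ ⟨z, rfl⟩
    rw [koszulD₁_apply]
    exact Submodule.sum_mem _ fun i _ ↦ Submodule.smul_mem_smul (hf i) Submodule.mem_top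
  exact Module.length_le_of_surjective (Submodule.factor hle) (Submodule.factor_surjective hle)

lemma length_quotient_smul_top_le_of_pow_mem {I : Ideal S} {f : ι → S} {q : ℕ} (hq : 0 < q)
    (hf : ∀ i, f i ^ q ∈ I) :
    Module.length S (N ⧸ (I • ⊤ : Submodule S N)) ≤
      (q ^ Fintype.card ι : ℕ) * Module.length S (KoszulH₀ N f) :=
  (length_quotient_smul_top_le (f := f ^ q) hf).trans (length_koszulH₀_pow_le f hq)

end Tensor

universe u

section Tor

open scoped TensorProduct

section Presentation

variable {S : Type*} [CommRing S] {N M P Q : Type*} [AddCommGroup N] [Module S N]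
  [AddCommGroup M] [Module S M] [AddCommGroup P] [Module S P] [AddCommGroup Q] [Module S Q]
  [Module.Projective S P] [Module.Projective S Q]

lemma length_ker_lTensor_ker_subtype_le {π : P →ₗ[S] M} {ρ : Q →ₗ[S] M}
    (hπ : Function.Surjective π) (hρ : Function.Surjective ρ) :
    Module.length S (LinearMap.ker ((LinearMap.ker π).subtype.lTensor N)) ≤
      Module.length S (LinearMap.ker ((LinearMap.ker ρ).subtype.lTensor N)) := by
  obtain ⟨b, hb⟩ := Module.projective_lifting_property ρ π hρ
  obtain ⟨a, ha⟩ := Module.projective_lifting_property π ρ hπ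
  have hb' (x : P) : ρ (b x) = π x := LinearMap.congr_fun hb x
  have ha' (x : Q) : π (a x) = ρ x := LinearMap.congr_fun ha x
  let b' : LinearMap.ker π →ₗ[S] LinearMap.ker ρ :=
    b.restrict fun x hx ↦ (hb' x).trans hx
  let a' : LinearMap.ker ρ →ₗ[S] LinearMap.ker π :=
    a.restrict fun x hx ↦ (ha' x).trans hx
  let h : P →ₗ[S] LinearMap.ker π := (LinearMap.id - a ∘ₗ b).codRestrict _ fun x ↦ by
    simp [ha', hb']
  have hhomotopy : LinearMap.id = a' ∘ₗ b' + h ∘ₗ (LinearMap.ker π).subtype := by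
    ext x
    exact (add_sub_cancel (a (b x)) (x : P)).symm
  have hcomm : (LinearMap.ker ρ).subtype ∘ₗ b' = b ∘ₗ (LinearMap.ker π).subtype := rfl
  refine Module.length_le_of_injective ((b'.lTensor N).restrict fun x hx ↦ ?_) ?_
  · rw [LinearMap.mem_ker] at hx ⊢
    rw [← LinearMap.lTensor_comp_apply, hcomm, LinearMap.lTensor_comp_apply, hx, map_zero]
  · rw [← LinearMap.ker_eq_bot, LinearMap.ker_eq_bot']
    rintro ⟨x, hx⟩ hbx
    have hbx' : b'.lTensor N x = 0 := congrArg Subtype.val hbx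
    refine Subtype.ext ?_
    calc x = (LinearMap.id : LinearMap.ker π →ₗ[S] _).lTensor N x := by
            rw [LinearMap.lTensor_id_apply]
      _ = a'.lTensor N (b'.lTensor N x) +
            h.lTensor N ((LinearMap.ker π).subtype.lTensor N x) := by
          rw [hhomotopy, LinearMap.lTensor_add, LinearMap.add_apply,
            LinearMap.lTensor_comp_apply, LinearMap.lTensor_comp_apply]
      _ = 0 := by rw [hbx', LinearMap.mem_ker.mp hx, map_zero, map_zero, add_zero]

end Presentation

section Exact

variable {S : Type*} [CommRing S] {N M P₀ P₁ P₂ : Type*} [AddCommGroup N] [Module S N]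
  [AddCommGroup M] [Module S M] [AddCommGroup P₀] [Module S P₀] [AddCommGroup P₁] [Module S P₁]
  [AddCommGroup P₂] [Module S P₂]

lemma length_homology_lTensor_le {d₂ : P₂ →ₗ[S] P₁} {d₁ : P₁ →ₗ[S] P₀} {π : P₀ →ₗ[S] M}
    (h₂ : Function.Exact d₂ d₁) (h₁ : Function.Exact d₁ π) :
    Module.length S (LinearMap.ker (d₁.lTensor N) ⧸
        (LinearMap.range (d₂.lTensor N)).submoduleOf (LinearMap.ker (d₁.lTensor N))) ≤
      Module.length S (LinearMap.ker ((LinearMap.ker π).subtype.lTensor N)) := by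
  let d₁' : P₁ →ₗ[S] LinearMap.ker π := d₁.codRestrict _ h₁.apply_apply_eq_zero
  have hexact : Function.Exact d₂ d₁' := fun x ↦ Subtype.ext_iff.trans (h₂ x)
  have hsurj : Function.Surjective d₁' := fun ⟨z, hz⟩ ↦ by
    obtain ⟨x, rfl⟩ := (h₁ z).mp hz
    exact ⟨x, rfl⟩
  have hcomp : (LinearMap.ker π).subtype.lTensor N ∘ₗ d₁'.lTensor N = d₁.lTensor N :=
    (LinearMap.lTensor_comp N _ _).symm
  let φ := (d₁'.lTensor N).restrict (p := LinearMap.ker (d₁.lTensor N))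
    (q := LinearMap.ker ((LinearMap.ker π).subtype.lTensor N))
    fun x hx ↦ (LinearMap.congr_fun hcomp x).trans hx
  have hker : LinearMap.ker φ =
      (LinearMap.range (d₂.lTensor N)).submoduleOf (LinearMap.ker (d₁.lTensor N)) := by
    ext x
    exact Subtype.ext_iff.trans (lTensor_exact N hexact hsurj x)
  rw [← hker]
  exact Module.length_le_of_injective _
    (LinearMap.ker_eq_bot.mp (Submodule.ker_liftQ_eq_bot _ φ le_rfl le_rfl))

end Exact

lemma length_tor_one_le {S : Type u} [CommRing S] (N : Type u) [AddCommGroup N] [Module S N]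
    (I : Ideal S) :
    Module.length S (((Tor (ModuleCat S) 1).obj (ModuleCat.of S N)).obj
        (ModuleCat.of S (S ⧸ I))) ≤
      Module.length S (LinearMap.ker (I.subtype.lTensor N)) := by
  let P := ProjectiveResolution.of (ModuleCat.of S (S ⧸ I))
  let F := (MonoidalCategory.tensoringLeft (ModuleCat S)).obj (ModuleCat.of S N)
  let K := (F.mapHomologicalComplex (ComplexShape.down ℕ)).obj P.complex
  let d₂ := (P.complex.d 2 1).hom
  let d₁ := (P.complex.d 1 0).hom
  let π := (P.π.f 0).hom
  have : Module.Projective S (P.complex.X 0) :=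
    (IsProjective.iff_projective (P.complex.X 0)).mpr (P.projective 0)
  have h₂ : Function.Exact d₂ d₁ :=
    (ShortComplex.ShortExact.moduleCat_exact_iff_function_exact _).mp (P.exact_succ 0)
  have h₁ : Function.Exact d₁ π :=
    (ShortComplex.ShortExact.moduleCat_exact_iff_function_exact _).mp P.exact₀
  have hπ : Function.Surjective π := (ModuleCat.epi_iff_surjective _).mp inferInstance
  have hd : ∀ x, d₂.lTensor N x ∈ LinearMap.ker (d₁.lTensor N) :=
    (K.sc' 2 1 0).moduleCat_zero_apply
  let e : ((F.leftDerived 1).obj (ModuleCat.of S (S ⧸ I))) ≅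
      (K.sc' 2 1 0).moduleCatLeftHomologyData.H :=
    P.isoLeftDerivedObj F 1 ≪≫
      ShortComplex.homologyMapIso (K.isoSc' 2 1 0 (by simp) (by simp)) ≪≫
      (K.sc' 2 1 0).moduleCatHomologyIso
  calc _ = Module.length S (LinearMap.ker (d₁.lTensor N) ⧸
          LinearMap.range ((d₂.lTensor N).codRestrict (LinearMap.ker (d₁.lTensor N)) hd)) :=
      e.toLinearEquiv.length_eq
    _ ≤ Module.length S (LinearMap.ker ((LinearMap.ker π).subtype.lTensor N)) := by
      rw [LinearMap.range_codRestrict]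
      exact length_homology_lTensor_le h₂ h₁
    _ ≤ Module.length S (LinearMap.ker ((LinearMap.ker I.mkQ).subtype.lTensor N)) :=
      length_ker_lTensor_ker_subtype_le hπ I.mkQ_surjective
    _ = _ := by rw [Submodule.ker_mkQ]

lemma length_tor_one_le_of_pow_mem {S : Type u} [CommRing S] {N : Type u} [AddCommGroup N]
    [Module S N] {ι κ : Type*} [Fintype ι] [Fintype κ]
    {I : Ideal S} {f : ι → S} {q : ℕ} (hq : 0 < q)
    (hf : ∀ i, f i ^ q ∈ I) {g : κ → S} (hg : Ideal.span (Set.range g) = I) :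
    Module.length S (((Tor (ModuleCat S) 1).obj (ModuleCat.of S N)).obj
        (ModuleCat.of S (S ⧸ I))) ≤
      (q ^ Fintype.card ι : ℕ) * (Module.length S (KoszulH₁ N f) +
        Fintype.card κ * Module.length S (KoszulH₀ N f)) := by
  have hgI (j : κ) : g j ∈ I := hg ▸ Ideal.subset_span ⟨j, rfl⟩
  calc _ ≤ Module.length S (LinearMap.ker (I.subtype.lTensor N)) := length_tor_one_le N I
    _ ≤ Module.length S (KoszulH₁ N (f ^ q)) +
          Fintype.card κ * Module.length S (KoszulH₀ N (f ^ q)) :=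
        length_ker_lTensor_subtype_le (fun i ↦ ⟨f i ^ q, hf i⟩)
          ((Submodule.span_range_subtype_eq_top_iff I hgI).mpr hg)
    _ ≤ (q ^ Fintype.card ι : ℕ) * Module.length S (KoszulH₁ N f) +
          Fintype.card κ * ((q ^ Fintype.card ι : ℕ) * Module.length S (KoszulH₀ N f)) := by
        gcongr
        · exact length_koszulH₁_pow_le f hq
        · exact length_koszulH₀_pow_le f hq
    _ = _ := by ring

end Tor

lemma bracketPow_span_range {R ι : Type*} [CommSemiring R] (p : ℕ) [ExpChar R p] (f : ι → R)
    (n : ℕ) :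
    bracketPow (Ideal.span (Set.range f)) (p ^ n) = Ideal.span (Set.range (f ^ p ^ n)) :=
  (Ideal.map_span (iterateFrobenius R p n) _).trans (congrArg _ (Set.range_comp _ f).symm)

lemma moduleLength_le_natCast_iff {R M : Type*} [CommRing R] [AddCommGroup M] [Module R M]
    {n : ℕ} : moduleLength R M ≤ n ↔ Module.length R M ≤ n := by
  rw [moduleLength, ← Module.coe_length]
  exact WithBot.coe_le_coe

theorem length_frobenius_powers_growth_general
    (S : Type u) [CommRing S] [IsNoetherianRing S]
    (p : ℕ) (hp : p.Prime) [CharP S p]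
    (J : Ideal S) (hJ : IsFiniteLength S (S ⧸ J))
    (N : Type u) [AddCommGroup N] [Module S N] [Module.Finite S N]
    (dN : ℕ) (hdN : ringKrullDim (S ⧸ Module.annihilator S N) = dN) :
    ∃ C₁ C₂ : ℕ, 0 < C₁ ∧ 0 < C₂ ∧ ∀ n : ℕ,
      moduleLength S (N ⧸ (bracketPow J (p ^ n) • ⊤ : Submodule S N)) ≤
        ((C₁ * (p ^ n) ^ dN : ℕ) : WithBot ℕ∞) ∧
      moduleLength S
          (((Tor (ModuleCat S) 1).obj (ModuleCat.of S N)).obj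
            (ModuleCat.of S (S ⧸ bracketPow J (p ^ n)))) ≤
        ((C₂ * (p ^ n) ^ dN : ℕ) : WithBot ℕ∞) := by
  have : ExpChar S p := .prime hp
  have : IsArtinianRing (S ⧸ J) :=
    isArtinian_of_tower S (isFiniteLength_iff_isNoetherian_isArtinian.mp hJ).2
  obtain ⟨y, hyJ, _⟩ :=
    exists_fin_isArtinianRing_quotient_sup_span (Module.annihilator S N) J hdN.le
  obtain ⟨k, x, rfl⟩ := Submodule.fg_iff_exists_fin_generating_family.mp J.fg_of_isNoetherianRing
  obtain ⟨c₀, hc₀⟩ := ENat.ne_top_iff_exists.mp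
    (length_ne_top_of_le_annihilator (annihilator_sup_span_le_annihilator_koszulH₀ (N := N) y))
  obtain ⟨c₁, hc₁⟩ := ENat.ne_top_iff_exists.mp
    (length_ne_top_of_le_annihilator (annihilator_sup_span_le_annihilator_koszulH₁ (N := N) y))
  refine ⟨c₀ + 1, c₁ + k * c₀ + 1, Nat.succ_pos _, Nat.succ_pos _, fun n ↦ ?_⟩
  have hq : 0 < p ^ n := pow_pos hp.pos n
  have hy (i : Fin dN) : y i ^ p ^ n ∈ bracketPow (Ideal.span (Set.range x)) (p ^ n) :=
    Ideal.subset_span ⟨y i, hyJ i, rfl⟩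
  have h₀ := length_quotient_smul_top_le_of_pow_mem (N := N) hq hy
  have h₁ := length_tor_one_le_of_pow_mem (N := N) hq hy (bracketPow_span_range p x n).symm
  rw [Fintype.card_fin, ← hc₀] at h₀
  rw [Fintype.card_fin, Fintype.card_fin, ← hc₀, ← hc₁] at h₁
  constructor <;> rw [moduleLength_le_natCast_iff]
  · exact h₀.trans (by norm_cast; rw [mul_comm]; exact Nat.mul_le_mul_right _ (Nat.le_succ _))
  · exact h₁.trans (by norm_cast; rw [mul_comm]; exact Nat.mul_le_mul_right _ (Nat.le_succ _))

/-- **Growth bounds for Frobenius powers.**  If `(S,m)` is a Noetherian local ring of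
characteristic `p > 0`, `J` is `m`-primary and `N` is finitely generated, then
`λ_S(N/J^{[p^n]}N)` and `λ_S(Tor₁^S(N, S/J^{[p^n]}))` are both `O((p^n)^{dim N})`. -/
theorem length_frobenius_powers_growth
    (S : Type) [CommRing S] [IsNoetherianRing S] [IsLocalRing S]
    (p : ℕ) (hp : p.Prime) [CharP S p]
    (J : Ideal S) (hJ : IsFiniteLength S (S ⧸ J))
    (N : Type) [AddCommGroup N] [Module S N] [Module.Finite S N]
    (dN : ℕ) (hdN : ringKrullDim (S ⧸ Module.annihilator S N) = dN) :
    ∃ C₁ C₂ : ℕ, 0 < C₁ ∧ 0 < C₂ ∧ ∀ n : ℕ,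
      moduleLength S (N ⧸ (bracketPow J (p ^ n) • ⊤ : Submodule S N)) ≤
        ((C₁ * (p ^ n) ^ dN : ℕ) : WithBot ℕ∞) ∧
      moduleLength S
          (((Tor (ModuleCat S) 1).obj (ModuleCat.of S N)).obj
            (ModuleCat.of S (S ⧸ bracketPow J (p ^ n)))) ≤
        ((C₂ * (p ^ n) ^ dN : ℕ) : WithBot ℕ∞) :=
  length_frobenius_powers_growth_general S p hp J hJ N dN hdN

end
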